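/- Let P be a set of permutations and E, A finite sets of permutations. Then the complement of the restriction P⟨E⟩(A) inside P satisfies P ∖ P⟨E⟩(A) = ⨄_{X ⊆ A, Y ⊆ E, (X,Y) ≠ (∅,∅)} P⟨X ∪ (E∖Y)⟩(Y ∪ (A∖X)), and this union is disjoint. -/

import Mathlib

/-! For `τ ∈ P`, let `X` be the set of patterns of `A` that `τ` avoids and `Y` the set of patterns of
`E` that `τ` contains, i.e. the violated conditions. By `mem_restr_swap_iff`, `(X, Y)` is the unique
pair whose term contains `τ`, which gives disjointness; by `mem_restr_iff`, `τ` lies outside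
`P⟨E⟩(A)` precisely when `(X, Y) ≠ (∅, ∅)`, which gives the union. -/

/-!  Background definitions: permutations are encoded in one-line notation as lists of
natural numbers; a permutation of size `n` is a list whose entries are exactly
`0, …, n-1` (0-based one-line notation).  -/

/-- `l` is the one-line (0-based) representation of a permutation of `{0,…,n-1}`. -/
def IsPermList (l : List ℕ) : Prop := List.Perm l (List.range l.length)

/-- Two lists of the same length are order-isomorphic (entrywise order relations agree). -/
def OrderIsoList (u v : List ℕ) : Prop :=
  u.length = v.length ∧
    ∀ i j, i < u.length → j < u.length → (u.getD i 0 < u.getD j 0 ↔ v.getD i 0 < v.getD j 0)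

/-- `p` is a pattern of `s` (written `p ⪯ s` in the paper): some subsequence of `s`
is order-isomorphic to `p`. -/
def Pattern (p s : List ℕ) : Prop :=
  ∃ t : List ℕ, t.Sublist s ∧ OrderIsoList p t

/-- The substitution `σ[bs₀, …, bs_{n-1}]`: the result is the concatenation, for
`i = 0, …, n-1`, of the block `bs i` with its values shifted up by the total size of
the blocks `j` with `σ j < σ i` (so block values form consecutive intervals arranged
according to `σ`).  This definition also serves as the *generalized* substitution,
since blocks are allowed to be the empty list (the empty permutation `0`). -/
def subst (σ : List ℕ) (bs : List (List ℕ)) : List ℕ :=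
  (List.range σ.length).flatMap fun i =>
    (bs.getD i []).map fun x =>
      x + (((List.range σ.length).map fun j =>
        if σ.getD j 0 < σ.getD i 0 then (bs.getD j []).length else 0).sum)

/-- `{i, …, i+ℓ-1}` (0-based) is an interval (block) of `σ`: a nonempty range of
positions within `σ` whose set of values is a set of `ℓ` consecutive integers. -/
def IsBlockOf (σ : List ℕ) (i ℓ : ℕ) : Prop :=
  0 < ℓ ∧ i + ℓ ≤ σ.length ∧
    ∃ m : ℕ, ∀ v : ℕ, (∃ k < ℓ, σ.getD (i + k) 0 = v) ↔ (m ≤ v ∧ v < m + ℓ)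

/-- A simple permutation: a permutation of size at least 4 whose only intervals are
the singletons and the whole permutation. -/
def IsSimplePerm (σ : List ℕ) : Prop :=
  IsPermList σ ∧ 4 ≤ σ.length ∧ ∀ i ℓ, IsBlockOf σ i ℓ → ℓ = 1 ∨ ℓ = σ.length

/-- `l` is 12-indecomposable: it cannot be written as `12[a,b]` for (nonempty) permutations `a, b`. -/
def Indec12 (l : List ℕ) : Prop :=
  ¬ ∃ a b : List ℕ, IsPermList a ∧ IsPermList b ∧ a ≠ [] ∧ b ≠ [] ∧ l = subst [0,1] [a,b]

/-- `l` is 21-indecomposable: it cannot be written as `21[a,b]` for (nonempty) permutations `a, b`. -/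
def Indec21 (l : List ℕ) : Prop :=
  ¬ ∃ a b : List ℕ, IsPermList a ∧ IsPermList b ∧ a ≠ [] ∧ b ≠ [] ∧ l = subst [1,0] [a,b]

/-- The restriction `P⟨E⟩(A)`: permutations of `P` avoiding every pattern of `E` and
containing every pattern of `A`. -/
def Restr (P E A : Set (List ℕ)) : Set (List ℕ) :=
  {τ ∈ P | (∀ e ∈ E, ¬ Pattern e τ) ∧ ∀ a ∈ A, Pattern a τ}

/-- A permutation of `P` lies in the term indexed by `(X, Y)`, where `X ⊆ A` and `Y ⊆ E`, iff `X` is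
exactly its set of violated containments and `Y` exactly its set of violated avoidances. -/
theorem mem_restr_swap_iff {P E A X Y : Set (List ℕ)} (hX : X ⊆ A) (hY : Y ⊆ E) (τ : List ℕ) :
    τ ∈ Restr P (X ∪ (E \ Y)) (Y ∪ (A \ X)) ↔
      τ ∈ P ∧ X = {a ∈ A | ¬ Pattern a τ} ∧ Y = {e ∈ E | Pattern e τ} := by
  constructor
  · rintro ⟨hP, hav, hco⟩
    refine ⟨hP, ?_, ?_⟩
    · ext a
      constructor
      · exact fun ha => ⟨hX ha, hav a (Or.inl ha)⟩
      · rintro ⟨ha, hn⟩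
        by_contra hx
        exact hn (hco a (Or.inr ⟨ha, hx⟩))
    · ext e
      constructor
      · exact fun he => ⟨hY he, hco e (Or.inl he)⟩
      · rintro ⟨he, hp⟩
        by_contra hy
        exact hav e (Or.inr ⟨he, hy⟩) hp
  · rintro ⟨hP, rfl, rfl⟩
    refine ⟨hP, ?_, ?_⟩
    · rintro e (he | he)
      · exact he.2
      · exact fun hp => he.2 ⟨he.1, hp⟩
    · rintro a (ha | ha)
      · exact ha.2
      · by_contra hn
        exact ha.2 ⟨ha.1, hn⟩

/-- `P⟨E⟩(A)` is the term with index `(∅, ∅)`: no condition is violated. -/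
theorem mem_restr_iff {P E A : Set (List ℕ)} (τ : List ℕ) :
    τ ∈ Restr P E A ↔
      τ ∈ P ∧ ({a ∈ A | ¬ Pattern a τ}, {e ∈ E | Pattern e τ}) =
        ((∅, ∅) : Set (List ℕ) × Set (List ℕ)) := by
  have h := mem_restr_swap_iff (P := P) (Set.empty_subset A) (Set.empty_subset E) τ
  simp only [Set.empty_union, Set.sdiff_empty] at h
  rw [h, Prod.mk.injEq, eq_comm (a := ∅), eq_comm (a := ∅)]

/-- Equation (7) of the paper: for `E, A` finite, the complement of
the restriction `P⟨E⟩(A)` inside `P` is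
`P ∖ P⟨E⟩(A) = ⨄_{X ⊆ A, Y ⊆ E, (X,Y) ≠ (∅,∅)} P⟨X ∪ (E∖Y)⟩(Y ∪ (A∖X))`,
and this union is disjoint. -/
theorem restr_compl (P E A : Set (List ℕ)) (hE : E.Finite) (hA : A.Finite)
    (idx : Set (Set (List ℕ) × Set (List ℕ)))
    (hidx : idx = {q | q.1 ⊆ A ∧ q.2 ⊆ E ∧ q ≠ (∅, ∅)})
    (term : Set (List ℕ) × Set (List ℕ) → Set (List ℕ))
    (hterm : term = fun q => Restr P (q.1 ∪ (E \ q.2)) (q.2 ∪ (A \ q.1))) :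
    (P \ Restr P E A = ⋃ q ∈ idx, term q) ∧
      ∀ q ∈ idx, ∀ q' ∈ idx, q ≠ q' → Disjoint (term q) (term q') := by
  subst hidx hterm
  refine ⟨?_, ?_⟩
  · ext τ
    simp only [Set.mem_iUnion, exists_prop]
    constructor
    · rintro ⟨hP, hn⟩
      have hX : {a ∈ A | ¬ Pattern a τ} ⊆ A := Set.sep_subset _ _
      have hY : {e ∈ E | Pattern e τ} ⊆ E := Set.sep_subset _ _
      exact ⟨(_, _), ⟨hX, hY, fun h => hn ((mem_restr_iff τ).2 ⟨hP, h⟩)⟩,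
        (mem_restr_swap_iff hX hY τ).2 ⟨hP, rfl, rfl⟩⟩
    · rintro ⟨⟨X, Y⟩, ⟨hX, hY, hne⟩, hτ⟩
      obtain ⟨hP, rfl, rfl⟩ := (mem_restr_swap_iff hX hY τ).1 hτ
      exact ⟨hP, fun h => hne ((mem_restr_iff τ).1 h).2⟩
  · rintro ⟨X, Y⟩ ⟨hX, hY, -⟩ ⟨X', Y'⟩ ⟨hX', hY', -⟩ hne
    refine Set.disjoint_left.2 fun τ h h' => hne ?_
    obtain ⟨-, rfl, rfl⟩ := (mem_restr_swap_iff hX hY τ).1 h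
    obtain ⟨-, rfl, rfl⟩ := (mem_restr_swap_iff hX' hY' τ).1 h'
    rfl
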